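/- arXiv:0802.0933 — 8 statements merged into one kernel-verified Lean document; each statement's English description precedes it below -/
import Mathlib

section
/- For all ζ, h ∈ ℝ with ζ ≠ 0 and ζ h ≥ 0, one has φ_k(ζ + h) − φ_k(ζ) − φ_k′(ζ) h ≤ k^{−1} h² ρ(|ζ|)^{−2}. -/
/-!
Write `G y = ∫₀^y ψ` and `F x = ∫₀^x G`, so that `φ = F ∘ |·|`, `F' = G` and `G' = ψ`. As `ζ` and `h`
have the same sign, `|ζ + h| = |ζ| + |h|` and `φ'(ζ) h = G(|ζ|) |h|`, and the claim becomes a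
second-order Taylor bound for `F` on `[|ζ|, ∞)`. There `ψ ≤ (2/k) ρ(|ζ|)⁻²`, because `ρ` is
non-decreasing and `ψ` vanishes outside `(a_k, a_{k-1})`; integrating this bound twice
(`sub_le_mul_of_deriv_le`, `taylor_bound`) gives the result.
-/

open MeasureTheory Set Filter

lemma sub_le_mul_of_deriv_le {G ψ : ℝ → ℝ} (hG : ∀ x, HasDerivAt G (ψ x) x) {a C : ℝ}
    (hψ : ∀ x, a ≤ x → ψ x ≤ C) {x : ℝ} (hx : a ≤ x) : G x - G a ≤ C * (x - a) := by
  have hd : ∀ y, HasDerivAt (fun y => C * y - G y) (C - ψ y) y := fun y => 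
    (((hasDerivAt_id y).const_mul C).sub (hG y)).congr_deriv (by simp)
  have hm : MonotoneOn (fun y => C * y - G y) (Ici a) := by
    refine monotoneOn_of_deriv_nonneg (convex_Ici a)
      (fun y _ => (hd y).continuousAt.continuousWithinAt)
      (fun y _ => (hd y).differentiableAt.differentiableWithinAt) fun y hy => ?_
    rw [(hd y).deriv]
    linarith [hψ y (interior_subset hy)]
  have := hm (mem_Ici.2 le_rfl) (mem_Ici.2 hx) hx
  simp only at this
  linarith

lemma taylor_bound {F G ψ : ℝ → ℝ} (hF : ∀ x, HasDerivAt F (G x) x)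
    (hG : ∀ x, HasDerivAt G (ψ x) x) {a C : ℝ} (hψ : ∀ x, a ≤ x → ψ x ≤ 2 * C) {t : ℝ}
    (ht : 0 ≤ t) : F (a + t) - F a - G a * t ≤ C * t ^ 2 := by
  have hd : ∀ y, HasDerivAt (fun y => C * (y - a) ^ 2 + G a * (y - a) - F y)
      (2 * C * (y - a) + G a - G y) y := fun y => by
    have h1 : HasDerivAt (fun y : ℝ => y - a) 1 y := (hasDerivAt_id y).sub_const a
    refine ((((h1.pow 2).const_mul C).add (h1.const_mul (G a))).sub (hF y)).congr_deriv ?_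
    norm_num
    ring
  have hm : MonotoneOn (fun y => C * (y - a) ^ 2 + G a * (y - a) - F y) (Ici a) := by
    refine monotoneOn_of_deriv_nonneg (convex_Ici a)
      (fun y _ => (hd y).continuousAt.continuousWithinAt)
      (fun y _ => (hd y).differentiableAt.differentiableWithinAt) fun y hy => ?_
    rw [(hd y).deriv]
    linarith [sub_le_mul_of_deriv_le hG hψ (interior_subset hy : a ≤ y)]
  have := hm (mem_Ici.2 le_rfl) (mem_Ici.2 (by linarith : a ≤ a + t)) (by linarith)
  simp only [sub_self, add_sub_cancel_left] at this
  linarith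

/-- If `ζ ≠ 0` and `ζ h ≥ 0`, then `D_h φ_k(ζ) ≤ k⁻¹ h² ρ(|ζ|)⁻²`. -/
theorem stmt4 (k : ℕ) (hk : 1 ≤ k) (ak akm1 : ℝ)
    (hak : 0 < ak) (haka : ak < akm1) (hakm1 : akm1 ≤ 1)
    (ψ : ℝ → ℝ) (hψ_cont : Continuous ψ) (hψ_nonneg : ∀ z, 0 ≤ ψ z)
    (hψ_supp : ∀ z, z ∉ Ioo ak akm1 → ψ z = 0)
    (hψ_int : (∫ z, ψ z) = 1)
    (φ : ℝ → ℝ) (hφ : ∀ x, φ x = ∫ y in (0:ℝ)..|x|, ∫ z in (0:ℝ)..y, ψ z)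
    (ρ : ℝ → ℝ) (hρ_nonneg : ∀ z, 0 ≤ z → 0 ≤ ρ z)
    (hρ_mono : MonotoneOn ρ (Ici 0)) (hρ_pos : ∀ z, 0 < z → 0 < ρ z)
    (hψρ : ∀ z ∈ Ioo ak akm1, ψ z ≤ (2 / k) * ((ρ z) ^ 2)⁻¹) :
    ∀ ζ h : ℝ, ζ ≠ 0 → 0 ≤ ζ * h →
      φ (ζ + h) - φ ζ - deriv φ ζ * h ≤ (k : ℝ)⁻¹ * h ^ 2 * ((ρ |ζ|) ^ 2)⁻¹ := by
  intro ζ h hζ hζh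
  have hG : ∀ x, HasDerivAt (fun y => ∫ z in (0:ℝ)..y, ψ z) (ψ x) x := fun x =>
    hψ_cont.integral_hasStrictDerivAt 0 x |>.hasDerivAt
  have hGc : Continuous (fun y => ∫ z in (0:ℝ)..y, ψ z) :=
    continuous_iff_continuousAt.2 fun x => (hG x).continuousAt
  have hF : ∀ x, HasDerivAt (fun x => ∫ y in (0:ℝ)..x, ∫ z in (0:ℝ)..y, ψ z)
      (∫ z in (0:ℝ)..x, ψ z) x := fun x =>
    hGc.integral_hasStrictDerivAt 0 x |>.hasDerivAt
  have ha : 0 < |ζ| := abs_pos.2 hζ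
  have hρa := hρ_pos _ ha
  have hψb : ∀ x, |ζ| ≤ x → ψ x ≤ 2 * ((k : ℝ)⁻¹ * ((ρ |ζ|) ^ 2)⁻¹) := fun x hx => by
    by_cases hxs : x ∈ Ioo ak akm1
    · have hρx : ρ |ζ| ≤ ρ x := hρ_mono ha.le (ha.le.trans hx) hx
      calc ψ x ≤ (2 / k) * ((ρ x) ^ 2)⁻¹ := hψρ x hxs
        _ ≤ (2 / k) * ((ρ |ζ|) ^ 2)⁻¹ := by gcongr
        _ = _ := by ring
    · rw [hψ_supp x hxs]
      positivity
  have key := taylor_bound hF hG hψb (abs_nonneg h)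
  have hφ' : φ = (fun x => ∫ y in (0:ℝ)..x, ∫ z in (0:ℝ)..y, ψ z) ∘ fun x => |x| := funext hφ
  have habs : |ζ + h| = |ζ| + |h| := by
    rcases mul_nonneg_iff.1 hζh with ⟨h1, h2⟩ | ⟨h1, h2⟩
    · rw [abs_of_nonneg h1, abs_of_nonneg h2, abs_of_nonneg (add_nonneg h1 h2)]
    · rw [abs_of_nonpos h1, abs_of_nonpos h2, abs_of_nonpos (add_nonpos h1 h2)]
      ring
  have hder : deriv φ ζ * h = (∫ z in (0:ℝ)..|ζ|, ψ z) * |h| := by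
    rw [hφ', ((hF |ζ|).comp ζ (hasDerivAt_abs hζ)).deriv, mul_assoc]
    congr 1
    rcases lt_or_gt_of_ne hζ with h1 | h1
    · have : h ≤ 0 := by nlinarith
      simp [h1, abs_of_nonpos this]
    · have : 0 ≤ h := by nlinarith
      simp [h1, abs_of_nonneg this]
  rw [hder, hφ, hφ, habs]
  rw [sq_abs] at key
  linarith
end

section
/- For all ζ, h ∈ ℝ with ζ h ≥ 0, one has 0 ≤ φ_k(ζ + h) − φ_k(ζ) − φ_k′(ζ) h ≤ φ_k(ζ + h) − φ_k(ζ) ≤ |h|. -/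
open MeasureTheory Set Filter

/-!
With `G y = ∫ z in 0..y, ψ z` and `F x = ∫ y in 0..x, G y`, both functions vanish on `(-∞, 0]` because
`ψ` does, so `φ x = F |x| = F x + F (-x)` for every real `x`. Hence `φ` is differentiable everywhere,
including at `0`, with derivative `D x = G x - G (-x)`. This `D` is monotone, takes values in
`[-1, 1]`, and satisfies `0 ≤ x * D x`. The mean value theorem (`exists_deriv_mul_eq`) gives
`φ (ζ + h) - φ ζ = D c * h` with `c` between `ζ` and `ζ + h`; monotonicity of `D` gives the first
inequality, the sign of `D` together with `0 ≤ ζ * h` the second, and `|D| ≤ 1` the third.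
-/

/-- Mean value theorem for an increment `h` of either sign, combined with monotonicity of the
derivative: the increment of `f` is `f' c * h` for some `c` with `f' ζ * h ≤ f' c * h`. -/
lemma exists_deriv_mul_eq {f f' : ℝ → ℝ} (hf : ∀ x, HasDerivAt f (f' x) x) (hmono : Monotone f')
    (ζ h : ℝ) : ∃ c, f (ζ + h) - f ζ = f' c * h ∧ f' ζ * h ≤ f' c * h := by
  have hcont : Continuous f := continuous_iff_continuousAt.2 fun x => (hf x).continuousAt
  rcases lt_trichotomy h 0 with hh | rfl | hh
  · obtain ⟨c, hc, e⟩ := exists_hasDerivAt_eq_slope f f' (show ζ + h < ζ by linarith)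
      hcont.continuousOn fun x _ => hf x
    refine ⟨c, ?_, mul_le_mul_of_nonpos_right (hmono hc.2.le) hh.le⟩
    have hh' := hh.ne
    rw [e, show ζ - (ζ + h) = -h by ring]
    field_simp
    ring
  · exact ⟨ζ, by simp, le_rfl⟩
  · obtain ⟨c, hc, e⟩ := exists_hasDerivAt_eq_slope f f' (show ζ < ζ + h by linarith)
      hcont.continuousOn fun x _ => hf x
    refine ⟨c, ?_, mul_le_mul_of_nonneg_right (hmono hc.1.le) hh.le⟩
    rw [e, show ζ + h - ζ = h by ring]
    field_simp

/-- If `ζ h ≥ 0`, then `0 ≤ D_h φ_k(ζ) ≤ Δ_h φ_k(ζ) ≤ |h|`. -/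
theorem stmt5 (k : ℕ) (hk : 1 ≤ k) (ak akm1 : ℝ)
    (hak : 0 < ak) (haka : ak < akm1) (hakm1 : akm1 ≤ 1)
    (ψ : ℝ → ℝ) (hψ_cont : Continuous ψ) (hψ_nonneg : ∀ z, 0 ≤ ψ z)
    (hψ_supp : ∀ z, z ∉ Ioo ak akm1 → ψ z = 0)
    (hψ_int : (∫ z, ψ z) = 1)
    (φ : ℝ → ℝ) (hφ : ∀ x, φ x = ∫ y in (0:ℝ)..|x|, ∫ z in (0:ℝ)..y, ψ z) :
    ∀ ζ h : ℝ, 0 ≤ ζ * h →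
      0 ≤ φ (ζ + h) - φ ζ - deriv φ ζ * h ∧
      φ (ζ + h) - φ ζ - deriv φ ζ * h ≤ φ (ζ + h) - φ ζ ∧
      φ (ζ + h) - φ ζ ≤ |h| := by
  intro ζ h hζh
  -- A nonintegrable `ψ` would have integral `0`.
  have hψ_i : Integrable ψ := by
    by_contra hn
    rw [integral_undef hn] at hψ_int
    exact zero_ne_one hψ_int
  set G : ℝ → ℝ := fun y => ∫ z in (0:ℝ)..y, ψ z with hG
  have hGd : ∀ y, HasDerivAt G (ψ y) y := fun y =>
    intervalIntegral.integral_hasDerivAt_right (hψ_cont.intervalIntegrable _ _)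
      hψ_cont.stronglyMeasurable.stronglyMeasurableAtFilter hψ_cont.continuousAt
  have hGc : Continuous G := continuous_iff_continuousAt.2 fun x => (hGd x).continuousAt
  have hGm : Monotone G := monotone_of_hasDerivAt_nonneg hGd hψ_nonneg
  have hG0 : ∀ y ≤ 0, G y = 0 := by
    intro y hy
    apply intervalIntegral.integral_zero_ae
    refine Eventually.of_forall fun z hz => hψ_supp z fun hz' => ?_
    rw [uIoc_of_ge hy] at hz
    linarith [hz.2, hz'.1]
  have hGnn : ∀ y, 0 ≤ G y := fun y =>
    (le_total 0 y).elim (fun hy => (hG0 0 le_rfl).ge.trans (hGm hy)) fun hy => (hG0 y hy).ge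
  have hG1 : ∀ y, G y ≤ 1 := by
    intro y
    rcases le_total 0 y with hy | hy
    · rw [← hψ_int, hG]
      simp only [intervalIntegral.integral_of_le hy]
      exact setIntegral_le_integral hψ_i (Eventually.of_forall hψ_nonneg)
    · rw [hG0 y hy]
      exact zero_le_one
  set F : ℝ → ℝ := fun x => ∫ y in (0:ℝ)..x, G y with hF
  have hFd : ∀ y, HasDerivAt F (G y) y := fun y =>
    intervalIntegral.integral_hasDerivAt_right (hGc.intervalIntegrable _ _)
      hGc.stronglyMeasurable.stronglyMeasurableAtFilter hGc.continuousAt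
  have hF0 : ∀ x ≤ 0, F x = 0 := by
    intro x hx
    apply intervalIntegral.integral_zero_ae
    refine Eventually.of_forall fun z hz => hG0 z ?_
    rw [uIoc_of_ge hx] at hz
    exact hz.2
  have hφF : φ = fun x => F x + F (-x) := by
    funext x
    rw [hφ x]
    change F |x| = _
    rcases le_total 0 x with hx | hx
    · rw [abs_of_nonneg hx, hF0 (-x) (by linarith), add_zero]
    · rw [abs_of_nonpos hx, hF0 x hx, zero_add]
  have hφd : ∀ x, HasDerivAt φ (G x - G (-x)) x := by
    intro x
    rw [hφF]
    have h2 : HasDerivAt (fun x => F (-x)) (G (-x) * (-1)) x :=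
      (hFd (-x)).comp x (hasDerivAt_neg x)
    exact ((hFd x).add h2).congr_deriv (by ring)
  have hDm : Monotone fun x => G x - G (-x) := fun x y hxy =>
    sub_le_sub (hGm hxy) (hGm (neg_le_neg hxy))
  obtain ⟨c, hc, hle⟩ := exists_deriv_mul_eq hφd hDm ζ h
  rw [(hφd ζ).deriv, hc]
  refine ⟨sub_nonneg.2 hle, sub_le_self _ ?_, ?_⟩
  · rcases lt_trichotomy ζ 0 with hz | rfl | hz
    · have hh : h ≤ 0 := nonpos_of_mul_nonneg_right hζh hz
      rw [hG0 ζ hz.le]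
      nlinarith [hGnn (-ζ)]
    · simp
    · have hh : 0 ≤ h := nonneg_of_mul_nonneg_right hζh hz
      rw [hG0 (-ζ) (by linarith)]
      nlinarith [hGnn ζ]
  · have hD : |G c - G (-c)| ≤ 1 := abs_le.2
      ⟨by linarith [hGnn c, hG1 (-c)], by linarith [hGnn (-c), hG1 c]⟩
    calc (G c - G (-c)) * h ≤ |(G c - G (-c)) * h| := le_abs_self _
      _ = |G c - G (-c)| * |h| := abs_mul _ _
      _ ≤ |h| := mul_le_of_le_one_left (abs_nonneg h) hD
end

section
/- For every real number n ≥ 1 and all x, y ∈ [0,m] with x ≠ y, writing l(x,y;u) = g(x,u) − g(y,u), one has ∫_U [ φ_k(x − y + l(x,y;u)) − φ_k(x − y) − φ_k′(x − y) l(x,y;u) ] μ(du) ≤ n/k + ∫_{{u ∈ U : g(m,u) > n}} g(m,u) μ(du). -/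
/-!
The integrand is the first-order Taylor remainder of `φ` at `x - y` with increment
`l = g x u - g y u`. Monotonicity of `g` gives `l` the sign of `x - y`, and `φ` is even, so one may
assume `a = x - y > 0` and `l ≥ 0`; then, with `Ψ y = ∫ z in 0..y, ψ z`, the remainder is
`∫ y in a..a+l, (Ψ y - Ψ a)`. Since `0 ≤ Ψ y - Ψ a ≤ 1` it is at most `l`, and since
`ψ z ≤ (2 / k) / ρ z ^ 2 ≤ (2 / k) / ρ a ^ 2` for `z ≥ a` it is at most `l ^ 2 / (k * ρ a ^ 2)`.

The first bound, with `l ≤ g m u`, is used where `g m u > n`. The second is used where `g m u ≤ n`: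
there `l ≤ n` and `1 ≤ n`, so `l ^ 2 ≤ n * min l (l ^ 2)`, and `hg_bound` bounds the integral by
`n * ρ a ^ 2`.
-/

open MeasureTheory Set Filter

/-- The two Taylor-remainder bounds at a positive base point `a` with a nonnegative increment `l`;
`2 * C` bounds `ψ` to the right of `a`. -/
lemma remainder_bounds (ψ : ℝ → ℝ) (hc : Continuous ψ) (h0 : ∀ z, 0 ≤ ψ z)
    (h1 : (∫ z, ψ z) = 1)
    (φ : ℝ → ℝ) (hφ : ∀ x, φ x = ∫ y in (0:ℝ)..|x|, ∫ z in (0:ℝ)..y, ψ z)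
    (a l C : ℝ) (ha : 0 < a) (hl : 0 ≤ l) (hC : ∀ z, a ≤ z → ψ z ≤ 2 * C) :
    0 ≤ φ (a + l) - φ a - deriv φ a * l ∧ φ (a + l) - φ a - deriv φ a * l ≤ l ∧
      φ (a + l) - φ a - deriv φ a * l ≤ C * l ^ 2 := by
  have hint : Integrable ψ := by
    by_contra h
    rw [integral_undef h] at h1
    exact zero_ne_one h1
  set Ψ : ℝ → ℝ := fun y => ∫ z in (0:ℝ)..y, ψ z with hΨ
  have hΨc : Continuous Ψ :=
    intervalIntegral.continuous_primitive (fun _ _ => hc.intervalIntegrable _ _) 0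
  have hd : deriv φ a = Ψ a := by
    have hev : φ =ᶠ[nhds a] fun x => ∫ y in (0:ℝ)..x, Ψ y := by
      filter_upwards [lt_mem_nhds ha] with x hx
      rw [hφ, abs_of_pos hx]
    rw [hev.deriv_eq]
    exact hΨc.deriv_integral _ _ _
  have hsub : ∀ y, Ψ y - Ψ a = ∫ z in a..y, ψ z := fun y =>
    intervalIntegral.integral_interval_sub_left (hc.intervalIntegrable _ _)
      (hc.intervalIntegrable _ _)
  have hrep : φ (a + l) - φ a - deriv φ a * l = ∫ y in a..(a + l), (Ψ y - Ψ a) := by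
    rw [hφ, hφ, abs_of_pos ha, abs_of_nonneg (by linarith),
      intervalIntegral.integral_interval_sub_left (hΨc.intervalIntegrable _ _)
      (hΨc.intervalIntegrable _ _), intervalIntegral.integral_sub (hΨc.intervalIntegrable _ _)
      (by simp), hd]
    simp [mul_comm]
  have hle : a ≤ a + l := by linarith
  have hDc : Continuous fun y => Ψ y - Ψ a := hΨc.sub continuous_const
  rw [hrep]
  refine ⟨?_, ?_, ?_⟩
  · refine intervalIntegral.integral_nonneg hle fun y hy => ?_
    rw [hsub]
    exact intervalIntegral.integral_nonneg hy.1 fun z _ => h0 z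
  · calc ∫ y in a..(a + l), (Ψ y - Ψ a) ≤ ∫ y in a..(a + l), (1 : ℝ) := by
          refine intervalIntegral.integral_mono_on hle (hDc.intervalIntegrable _ _) (by simp)
            fun y hy => ?_
          rw [hsub, intervalIntegral.integral_of_le hy.1, ← h1]
          exact setIntegral_le_integral hint (Eventually.of_forall h0)
      _ = l := by simp
  · calc ∫ y in a..(a + l), (Ψ y - Ψ a) ≤ ∫ y in a..(a + l), 2 * C * (y - a) := by
          refine intervalIntegral.integral_mono_on hle (hDc.intervalIntegrable _ _)
            (Continuous.intervalIntegrable (by fun_prop) _ _) fun y hy => ?_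
          rw [hsub]
          calc ∫ z in a..y, ψ z ≤ ∫ z in a..y, 2 * C :=
                intervalIntegral.integral_mono_on hy.1 (hc.intervalIntegrable _ _) (by simp)
                  fun z hz => hC z hz.1
            _ = 2 * C * (y - a) := by
                rw [intervalIntegral.integral_const, smul_eq_mul, mul_comm]
      _ = C * l ^ 2 := by
          rw [intervalIntegral.integral_const_mul,
            intervalIntegral.integral_comp_sub_right (fun y => y) a, integral_id]
          ring

/-- `remainder_bounds` for a base point `a` and an increment `l` of the same, arbitrary, sign. -/
lemma remainder_bounds_signed (ψ : ℝ → ℝ) (hc : Continuous ψ) (h0 : ∀ z, 0 ≤ ψ z)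
    (h1 : (∫ z, ψ z) = 1)
    (φ : ℝ → ℝ) (hφ : ∀ x, φ x = ∫ y in (0:ℝ)..|x|, ∫ z in (0:ℝ)..y, ψ z)
    (a l C : ℝ) (hal : (0 < a ∧ 0 ≤ l) ∨ (a < 0 ∧ l ≤ 0))
    (hC : ∀ z, |a| ≤ z → ψ z ≤ 2 * C) :
    0 ≤ φ (a + l) - φ a - deriv φ a * l ∧ φ (a + l) - φ a - deriv φ a * l ≤ |l| ∧
      φ (a + l) - φ a - deriv φ a * l ≤ C * l ^ 2 := by
  rcases hal with ⟨ha, hl⟩ | ⟨ha, hl⟩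
  · rw [abs_of_pos ha] at hC
    rw [abs_of_nonneg hl]
    exact remainder_bounds ψ hc h0 h1 φ hφ a l C ha hl hC
  · rw [abs_of_neg ha] at hC
    rw [abs_of_nonpos hl]
    have hev : ∀ x, φ (-x) = φ x := fun x => by rw [hφ, hφ, abs_neg]
    have hd : deriv φ (-a) = -deriv φ a := by
      have h := deriv_comp_neg φ a
      simp only [hev] at h
      linarith
    have key := remainder_bounds ψ hc h0 h1 φ hφ (-a) (-l) C (by linarith) (by linarith) hC
    rw [← neg_add, hev, hev, hd, neg_mul_neg, neg_sq] at key
    exact key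

/-- Estimate on `∫_U D_{l(x,y;u)} φ_k(x-y) μ(du)` under condition (3.b):
the integral is bounded by `n/k + ∫_{g(m,u) > n} g(m,u) μ(du)`. -/
theorem stmt7 {U : Type*} [MeasurableSpace U] (μ : Measure U)
    (k : ℕ) (hk : 1 ≤ k) (ak akm1 : ℝ)
    (hak : 0 < ak) (haka : ak < akm1) (hakm1 : akm1 ≤ 1)
    (ψ : ℝ → ℝ) (hψ_cont : Continuous ψ) (hψ_nonneg : ∀ z, 0 ≤ ψ z)
    (hψ_supp : ∀ z, z ∉ Ioo ak akm1 → ψ z = 0)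
    (hψ_int : (∫ z, ψ z) = 1)
    (φ : ℝ → ℝ) (hφ : ∀ x, φ x = ∫ y in (0:ℝ)..|x|, ∫ z in (0:ℝ)..y, ψ z)
    (ρ : ℝ → ℝ) (hρ_nonneg : ∀ z, 0 ≤ z → 0 ≤ ρ z)
    (hρ_mono : MonotoneOn ρ (Ici 0)) (hρ_pos : ∀ z, 0 < z → 0 < ρ z)
    (hψρ : ∀ z ∈ Ioo ak akm1, ψ z ≤ (2 / k) * ((ρ z) ^ 2)⁻¹)
    (m : ℝ) (hm : 1 ≤ m)
    (g : ℝ → U → ℝ)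
    (hg_meas : ∀ x ∈ Icc (0:ℝ) m, Measurable (g x))
    (hg_nonneg : ∀ x ∈ Icc (0:ℝ) m, ∀ u, 0 ≤ g x u)
    (hg_mono : ∀ u : U, ∀ x ∈ Icc (0:ℝ) m, ∀ y ∈ Icc (0:ℝ) m, x ≤ y → g x u ≤ g y u)
    (hg_int : Integrable (fun u => min (g m u) ((g m u) ^ 2)) μ)
    (hg_bound : ∀ x ∈ Icc (0:ℝ) m, ∀ y ∈ Icc (0:ℝ) m,
      ∫ u, min |g x u - g y u| ((g x u - g y u) ^ 2) ∂μ ≤ (ρ |x - y|) ^ 2)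
    (n : ℝ) (hn : 1 ≤ n) :
    ∀ x ∈ Icc (0:ℝ) m, ∀ y ∈ Icc (0:ℝ) m, x ≠ y →
      (∫ u, (φ (x - y + (g x u - g y u)) - φ (x - y)
          - deriv φ (x - y) * (g x u - g y u)) ∂μ)
        ≤ n / k + ∫ u in {u : U | g m u > n}, g m u ∂μ := by
  intro x hx y hy hxy
  have hmm : m ∈ Icc (0:ℝ) m := ⟨by linarith, le_rfl⟩
  have hk0 : (0:ℝ) < k := by exact_mod_cast hk
  have hpos : 0 < |x - y| := abs_pos.mpr (sub_ne_zero.mpr hxy)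
  have hr := hρ_pos _ hpos
  set r := ρ |x - y| with hrdef
  have hC : ∀ z, |x - y| ≤ z → ψ z ≤ 2 * (1 / (k * r ^ 2)) := by
    intro z hz
    by_cases hzs : z ∈ Ioo ak akm1
    · have hrz : r ≤ ρ z := hρ_mono (mem_Ici.mpr hpos.le) (mem_Ici.mpr (hpos.le.trans hz)) hz
      calc ψ z ≤ (2 / k) * ((ρ z) ^ 2)⁻¹ := hψρ z hzs
        _ ≤ (2 / k) * (r ^ 2)⁻¹ := by gcongr
        _ = 2 * (1 / (k * r ^ 2)) := by field_simp
    · rw [hψ_supp z hzs]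
      positivity
  have hsign : ∀ u, (0 < x - y ∧ 0 ≤ g x u - g y u) ∨ (x - y < 0 ∧ g x u - g y u ≤ 0) := by
    intro u
    rcases lt_or_gt_of_ne hxy with h | h
    · exact Or.inr ⟨by linarith, by linarith [hg_mono u x hx y hy h.le]⟩
    · exact Or.inl ⟨by linarith, by linarith [hg_mono u y hy x hx h.le]⟩
  have key := fun u => remainder_bounds_signed ψ hψ_cont hψ_nonneg hψ_int φ hφ (x - y)
    (g x u - g y u) (1 / (k * r ^ 2)) (hsign u) hC
  have hlg : ∀ u, |g x u - g y u| ≤ g m u := by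
    intro u
    have h1 := hg_mono u x hx m hmm hx.2
    have h2 := hg_mono u y hy m hmm hy.2
    have h3 := hg_nonneg x hx u
    have h4 := hg_nonneg y hy u
    exact abs_le.mpr ⟨by linarith, by linarith⟩
  have hset : MeasurableSet {u : U | g m u > n} :=
    measurableSet_lt measurable_const (hg_meas m hmm)
  have hminI : Integrable (fun u => min |g x u - g y u| ((g x u - g y u) ^ 2)) μ := by
    have hx' := hg_meas x hx
    have hy' := hg_meas y hy
    refine hg_int.mono' (by fun_prop) (Eventually.of_forall fun u => ?_)
    rw [Real.norm_of_nonneg (by positivity)]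
    have h := hlg u
    refine min_le_min h ?_
    rw [← sq_abs]
    gcongr
  -- Where `g m u > n ≥ 1` the minimum of `g m u` and its square is `g m u` itself.
  have hindI : Integrable ({u : U | g m u > n}.indicator (g m)) μ := by
    refine hg_int.mono' ((hg_meas m hmm).indicator hset).aestronglyMeasurable
      (Eventually.of_forall fun u => ?_)
    have hgm := hg_nonneg m hmm u
    by_cases hu : g m u > n
    · rw [indicator_of_mem (by exact hu), Real.norm_of_nonneg hgm]
      exact le_min le_rfl (by nlinarith)
    · rw [indicator_of_notMem (by exact hu), norm_zero]
      positivity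
  have hpt : ∀ u, φ (x - y + (g x u - g y u)) - φ (x - y) - deriv φ (x - y) * (g x u - g y u) ≤
      n / (k * r ^ 2) * min |g x u - g y u| ((g x u - g y u) ^ 2)
        + {u : U | g m u > n}.indicator (g m) u := by
    intro u
    obtain ⟨-, hk1, hk2⟩ := key u
    have hln := hlg u
    by_cases hu : g m u > n
    · rw [indicator_of_mem (by exact hu)]
      have : 0 ≤ n / (k * r ^ 2) * min |g x u - g y u| ((g x u - g y u) ^ 2) := by positivity
      linarith
    · rw [indicator_of_notMem (by exact hu), add_zero]
      have hsq : (g x u - g y u) ^ 2 ≤ n * min |g x u - g y u| ((g x u - g y u) ^ 2) := by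
        have h0 := abs_nonneg (g x u - g y u)
        rw [mul_min_of_nonneg _ _ (by linarith)]
        refine le_min ?_ ?_
        · rw [← sq_abs]
          nlinarith
        · nlinarith [sq_nonneg (g x u - g y u)]
      calc _ ≤ 1 / (k * r ^ 2) * (g x u - g y u) ^ 2 := hk2
        _ ≤ 1 / (k * r ^ 2) * (n * min |g x u - g y u| ((g x u - g y u) ^ 2)) := by gcongr
        _ = _ := by ring
  calc _ ≤ ∫ u, (n / (k * r ^ 2) * min |g x u - g y u| ((g x u - g y u) ^ 2)
        + {u : U | g m u > n}.indicator (g m) u) ∂μ :=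
        integral_mono_of_nonneg (Eventually.of_forall fun u => (key u).1)
          ((hminI.const_mul _).add hindI) (Eventually.of_forall hpt)
    _ = n / (k * r ^ 2) * (∫ u, min |g x u - g y u| ((g x u - g y u) ^ 2) ∂μ)
        + ∫ u in {u : U | g m u > n}, g m u ∂μ := by
        rw [integral_add (hminI.const_mul _) hindI, integral_const_mul, integral_indicator hset]
    _ ≤ n / (k * r ^ 2) * r ^ 2 + ∫ u in {u : U | g m u > n}, g m u ∂μ := by
        gcongr
        exact hg_bound x hx y hy
    _ = _ := by
        congr 1
        field_simp
end

section
/- For every ε > 0 there exists an integer K ≥ 1 such that for all k ≥ K and all x, y ∈ [0,m], writing l(x,y;u) = g(x,u) − g(y,u), one has ∫_U [ φ_k(x − y + l(x,y;u)) − φ_k(x − y) − φ_k′(x − y) l(x,y;u) ] μ(du) ≤ ε; that is, these integrals converge to 0 as k → ∞, uniformly in x, y ∈ [0,m]. -/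
open MeasureTheory Set Filter

/-!
For `h > 0` and `l ≥ 0`, with `Φ y = ∫₀^y ψ_k`, the integrand is
`D = ∫_h^{h+l} (Φ y - Φ h) dy`. On `[h, ∞)` the density satisfies `ψ_k ≤ C := (2/k) ρ(h)⁻²`, because
`ρ` is non-decreasing, and `ψ_k` vanishes on `[1, ∞)`, because `a_{k-1} ≤ a_0 = 1`. Hence
`0 ≤ Φ y - Φ h ≤ C min(y - h, 1)`, and so `0 ≤ D ≤ C min(l, l²)` (`taylor_remainder_bound`).

Since `g(·, u)` is non-decreasing, `x - y` and `l(x,y;u)` have the same sign, and since `φ_k` is even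
the bound holds for both signs; for `x = y` the integrand vanishes. Integrating the bound and using
`∫ min(|l|, l²) dμ ≤ ρ(|x - y|)²` gives `∫ D dμ ≤ 2/k`, uniformly in `x` and `y`.
-/

lemma hasDerivAt_of_pos {ψ φ : ℝ → ℝ} (hψ : Continuous ψ)
    (hφ : ∀ x, φ x = ∫ y in (0:ℝ)..|x|, ∫ z in (0:ℝ)..y, ψ z) {h : ℝ} (hh : 0 < h) :
    HasDerivAt φ (∫ z in (0:ℝ)..h, ψ z) h := by
  have hΦ : Continuous (fun y : ℝ => ∫ z in (0:ℝ)..y, ψ z) :=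
    intervalIntegral.continuous_primitive (fun _ _ => hψ.intervalIntegrable _ _) 0
  have h1 : HasDerivAt (fun x : ℝ => ∫ y in (0:ℝ)..x, ∫ z in (0:ℝ)..y, ψ z)
      (∫ z in (0:ℝ)..h, ψ z) h :=
    intervalIntegral.integral_hasDerivAt_right (hΦ.intervalIntegrable _ _)
      (hΦ.stronglyMeasurableAtFilter _ _) hΦ.continuousAt
  refine h1.congr_of_eventuallyEq ?_
  filter_upwards [lt_mem_nhds hh] with x hx
  rw [hφ, abs_of_pos hx]

/-- The bound `C * min l (l ^ 2)` combines the linear bound coming from `supp ψ ⊆ (-∞, 1]`, which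
serves large `l`, with the quadratic one coming from `ψ ≤ C`, which serves small `l`. -/
lemma taylor_remainder_bound {ψ φ : ℝ → ℝ} (hψ : Continuous ψ) (hψ0 : ∀ z, 0 ≤ ψ z)
    (hψ1 : ∀ z, 1 ≤ z → ψ z = 0)
    (hφ : ∀ x, φ x = ∫ y in (0:ℝ)..|x|, ∫ z in (0:ℝ)..y, ψ z) {h l C : ℝ} (hh : 0 < h)
    (hl : 0 ≤ l) (hC0 : 0 ≤ C) (hC : ∀ z, h ≤ z → ψ z ≤ C) :
    0 ≤ φ (h + l) - φ h - deriv φ h * l ∧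
      φ (h + l) - φ h - deriv φ h * l ≤ C * min l (l ^ 2) := by
  have hΦ : Continuous (fun y : ℝ => ∫ z in (0:ℝ)..y, ψ z) :=
    intervalIntegral.continuous_primitive (fun _ _ => hψ.intervalIntegrable _ _) 0
  have hψi : ∀ p q : ℝ, IntervalIntegrable ψ volume p q := fun p q => hψ.intervalIntegrable p q
  have hD : φ (h + l) - φ h - deriv φ h * l
      = ∫ y in h..(h + l), ∫ z in h..y, ψ z := by
    have hsub : ∀ y : ℝ, ∫ z in h..y, ψ z
        = (∫ z in (0:ℝ)..y, ψ z) - ∫ z in (0:ℝ)..h, ψ z := fun y =>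
      (intervalIntegral.integral_interval_sub_left (hψi _ _) (hψi _ _)).symm
    simp_rw [hsub]
    rw [intervalIntegral.integral_sub (hΦ.intervalIntegrable _ _)
      intervalIntegrable_const, intervalIntegral.integral_const,
      (hasDerivAt_of_pos hψ hφ hh).deriv, hφ, hφ, abs_of_pos hh,
      abs_of_nonneg (by linarith : 0 ≤ h + l),
      intervalIntegral.integral_interval_sub_left (hΦ.intervalIntegrable _ _)
        (hΦ.intervalIntegrable _ _), smul_eq_mul]
    ring
  have hlin : ∀ y, h ≤ y → ∫ z in h..y, ψ z ≤ C * (y - h) := by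
    intro y hy
    have := intervalIntegral.integral_mono_on hy (hψi h y)
      (intervalIntegrable_const (c := C)) (fun z hz => hC z hz.1)
    rw [intervalIntegral.integral_const, smul_eq_mul] at this
    linarith
  have hone : ∀ y, h ≤ y → ∫ z in h..y, ψ z ≤ C := by
    intro y hy
    rcases le_total (y - h) 1 with h1 | h1
    · nlinarith [hlin y hy]
    · have hz : ∫ z in (h + 1)..y, ψ z = 0 := by
        rw [intervalIntegral.integral_congr (g := fun _ => (0:ℝ)), intervalIntegral.integral_zero]
        intro z hz
        rw [uIcc_of_le (by linarith)] at hz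
        exact hψ1 z (by linarith [hz.1])
      rw [← intervalIntegral.integral_add_adjacent_intervals (hψi h (h + 1)) (hψi (h + 1) y), hz]
      have := hlin (h + 1) (by linarith)
      linarith
  have hcont : Continuous (fun y : ℝ => ∫ z in h..y, ψ z) :=
    intervalIntegral.continuous_primitive (fun _ _ => hψi _ _) h
  have key : ∀ B : ℝ, (∀ y ∈ Icc h (h + l), ∫ z in h..y, ψ z ≤ B) →
      ∫ y in h..(h + l), ∫ z in h..y, ψ z ≤ l * B := by
    intro B hB
    have := intervalIntegral.integral_mono_on (by linarith : h ≤ h + l)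
      (hcont.intervalIntegrable (μ := volume) _ _) (intervalIntegrable_const (c := B)) hB
    rw [intervalIntegral.integral_const, smul_eq_mul] at this
    linarith
  rw [hD]
  refine ⟨intervalIntegral.integral_nonneg (by linarith) fun y hy =>
    intervalIntegral.integral_nonneg hy.1 fun z _ => hψ0 z, ?_⟩
  rw [mul_min_of_nonneg _ _ hC0]
  refine le_min ?_ ?_
  · linarith [key C fun y hy => hone y hy.1]
  · have := key (C * l) fun y hy => (hlin y hy.1).trans
      (mul_le_mul_of_nonneg_left (by linarith [hy.2]) hC0)
    linarith

/-- Under condition (3.b), `∫_U D_{l(x,y;u)} φ_k(x-y) μ(du) → 0` as `k → ∞`,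
uniformly in `x, y ∈ [0,m]`. -/
theorem stmt8 {U : Type*} [MeasurableSpace U] (μ : Measure U)
    (a : ℕ → ℝ) (ψ : ℕ → ℝ → ℝ) (φ : ℕ → ℝ → ℝ)
    (ha_pos : ∀ j, 0 < a j) (ha_anti : StrictAnti a) (ha0 : a 0 = 1)
    (ha_lim : Tendsto a atTop (nhds 0))
    (hψ_cont : ∀ k, 1 ≤ k → Continuous (ψ k))
    (hψ_nonneg : ∀ k, 1 ≤ k → ∀ z, 0 ≤ ψ k z)
    (hψ_supp : ∀ k, 1 ≤ k → ∀ z, z ∉ Ioo (a k) (a (k - 1)) → ψ k z = 0)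
    (hψ_int : ∀ k, 1 ≤ k → (∫ z, ψ k z) = 1)
    (hφ : ∀ k x, φ k x = ∫ y in (0:ℝ)..|x|, ∫ z in (0:ℝ)..y, ψ k z)
    (ρ : ℝ → ℝ) (hρ_nonneg : ∀ z, 0 ≤ z → 0 ≤ ρ z)
    (hρ_mono : MonotoneOn ρ (Ici 0)) (hρ_pos : ∀ z, 0 < z → 0 < ρ z)
    (hψρ : ∀ k, 1 ≤ k → ∀ z ∈ Ioo (a k) (a (k - 1)), ψ k z ≤ (2 / k) * ((ρ z) ^ 2)⁻¹)
    (m : ℝ) (hm : 1 ≤ m)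
    (g : ℝ → U → ℝ)
    (hg_meas : ∀ x ∈ Icc (0:ℝ) m, Measurable (g x))
    (hg_nonneg : ∀ x ∈ Icc (0:ℝ) m, ∀ u, 0 ≤ g x u)
    (hg_mono : ∀ u : U, ∀ x ∈ Icc (0:ℝ) m, ∀ y ∈ Icc (0:ℝ) m, x ≤ y → g x u ≤ g y u)
    (hg_int : Integrable (fun u => min (g m u) ((g m u) ^ 2)) μ)
    (hg_bound : ∀ x ∈ Icc (0:ℝ) m, ∀ y ∈ Icc (0:ℝ) m,
      ∫ u, min |g x u - g y u| ((g x u - g y u) ^ 2) ∂μ ≤ (ρ |x - y|) ^ 2) :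
    ∀ ε : ℝ, 0 < ε → ∃ K : ℕ, 1 ≤ K ∧ ∀ k : ℕ, K ≤ k →
      ∀ x ∈ Icc (0:ℝ) m, ∀ y ∈ Icc (0:ℝ) m,
        (∫ u, (φ k (x - y + (g x u - g y u)) - φ k (x - y)
            - deriv (φ k) (x - y) * (g x u - g y u)) ∂μ) ≤ ε := by
  intro ε hε
  obtain ⟨K, hK⟩ := exists_nat_gt (2 / ε)
  have hKpos : (0:ℝ) < K := lt_trans (by positivity) hK
  refine ⟨K, by exact_mod_cast hKpos, ?_⟩
  intro k hk x hx y hy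
  have hkK : (K:ℝ) ≤ k := by exact_mod_cast hk
  have hkpos : (0:ℝ) < k := hKpos.trans_le hkK
  have hk1 : 1 ≤ k := by exact_mod_cast hkpos
  have hkε : 2 / (k:ℝ) ≤ ε := by
    rw [div_lt_iff₀ hε] at hK
    rw [div_le_iff₀ hkpos]
    nlinarith
  rcases eq_or_ne x y with rfl | hxy
  · simpa using hε.le
  have hd : 0 < |x - y| := abs_pos.mpr (sub_ne_zero.mpr hxy)
  have hρd := hρ_pos _ hd
  set C : ℝ := (2 / k) * ((ρ |x - y|) ^ 2)⁻¹ with hCdef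
  have hC0 : 0 ≤ C := by positivity
  have ha1 : a (k - 1) ≤ 1 := ha0 ▸ ha_anti.antitone (Nat.zero_le _)
  have hψ1 : ∀ z, 1 ≤ z → ψ k z = 0 := fun z hz =>
    hψ_supp k hk1 z fun hz' => by linarith [hz'.2]
  have hC : ∀ z, |x - y| ≤ z → ψ k z ≤ C := by
    intro z hz
    by_cases hzm : z ∈ Ioo (a k) (a (k - 1))
    · refine (hψρ k hk1 z hzm).trans ?_
      have := hρ_mono (mem_Ici.mpr hd.le) (mem_Ici.mpr (hd.le.trans hz)) hz
      rw [hCdef]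
      gcongr
    · rw [hψ_supp k hk1 z hzm]
      exact hC0
  have heven : ∀ t, φ k (-t) = φ k t := fun t => by rw [hφ, hφ, abs_neg]
  have hderiv : ∀ t, deriv (φ k) (-t) = -deriv (φ k) t := by
    intro t
    have := deriv_comp_neg (φ k) t
    simp only [heven] at this
    linarith
  have hbd : ∀ u, 0 ≤ φ k (x - y + (g x u - g y u)) - φ k (x - y)
        - deriv (φ k) (x - y) * (g x u - g y u) ∧
      φ k (x - y + (g x u - g y u)) - φ k (x - y) - deriv (φ k) (x - y) * (g x u - g y u)
        ≤ C * min |g x u - g y u| ((g x u - g y u) ^ 2) := by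
    intro u
    have core := taylor_remainder_bound (l := |g x u - g y u|) (hψ_cont k hk1)
      (hψ_nonneg k hk1) hψ1 (hφ k) hd (abs_nonneg _) hC0 hC
    rw [sq_abs] at core
    rcases lt_or_gt_of_ne hxy with h | h
    · have hg := hg_mono u x hx y hy h.le
      -- Both `x - y` and `g x u - g y u` are non-positive: reflect by evenness of `φ k`.
      have e1 : |x - y| = -(x - y) := abs_of_neg (by linarith)
      have e2 : |g x u - g y u| = -(g x u - g y u) := abs_of_nonpos (by linarith)
      have e3 : |x - y| + |g x u - g y u| = -(x - y + (g x u - g y u)) := by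
        rw [e1, e2]; ring
      rw [e3, heven, e1, heven, hderiv] at core
      have e4 : -deriv (φ k) (x - y) * |g x u - g y u|
          = deriv (φ k) (x - y) * (g x u - g y u) := by rw [e2]; ring
      rwa [e4] at core
    · have hg := hg_mono u y hy x hx h.le
      have e1 : |x - y| = x - y := abs_of_pos (by linarith)
      have e2 : |g x u - g y u| = g x u - g y u := abs_of_nonneg (by linarith)
      rw [e1, e2] at core
      rwa [e2]
  have hmm : m ∈ Icc (0:ℝ) m := ⟨by linarith, le_rfl⟩
  have hint : Integrable (fun u => min |g x u - g y u| ((g x u - g y u) ^ 2)) μ := by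
    have hmeas : Measurable (fun u => g x u - g y u) := (hg_meas x hx).sub (hg_meas y hy)
    refine hg_int.mono' ((hmeas.abs).min (hmeas.pow_const 2)).aestronglyMeasurable ?_
    refine Eventually.of_forall fun u => ?_
    have hl : |g x u - g y u| ≤ g m u := by
      rw [abs_le]
      constructor <;> linarith [hg_nonneg x hx u, hg_nonneg y hy u,
        hg_mono u x hx m hmm hx.2, hg_mono u y hy m hmm hy.2]
    rw [Real.norm_of_nonneg (le_min (abs_nonneg _) (sq_nonneg _))]
    refine min_le_min hl ?_
    rw [← sq_abs]
    gcongr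
  calc _ ≤ ∫ u, C * min |g x u - g y u| ((g x u - g y u) ^ 2) ∂μ :=
        integral_mono_of_nonneg (Eventually.of_forall fun u => (hbd u).1) (hint.const_mul C)
          (Eventually.of_forall fun u => (hbd u).2)
    _ = C * ∫ u, min |g x u - g y u| ((g x u - g y u) ^ 2) ∂μ := integral_const_mul _ _
    _ ≤ C * (ρ |x - y|) ^ 2 := mul_le_mul_of_nonneg_left (hg_bound x hx y hy) hC0
    _ = 2 / k := by rw [hCdef]; field_simp
    _ ≤ ε := hkε
end

section
/- For every real number n ≥ 1 and all x, y ∈ [0,m] with x ≠ y, writing l(x,y;u) = g(x,u) − g(y,u), one has ∫_U [ φ_k(x − y + l(x,y;u)) − φ_k(x − y) − φ_k′(x − y) l(x,y;u) ] μ(du) ≤ (n/k) ∫_U min(f(u), f(u)²) μ(du) + ρ(m) ∫_{{u ∈ U : f(u) > n}} f(u) μ(du). -/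
/-!
Put `Φ y = ∫_0^y ψ` and `G y = ∫_0^y Φ`, so `φ x = G |x|`. As `g` is monotone in its first variable,
`d = x - y` and the increment `l = g x u - g y u` have the same sign, so with `a = |d| > 0` and
`h = |l| ≤ ρ a * f u` the integrand equals
`G (a + h) - G a - Φ a * h = ∫_a^{a+h} (Φ s - Φ a) ds` (`integrand_eq`, `second_order_eq`). It is
bounded in two ways:

* `ψ ≤ (2 / k) / (ρ a)²` on `[a, ∞)`, as `ρ` is monotone and `ψ` vanishes off `(ak, akm1)`, so the
  integrand is at most
  `h² / (k (ρ a)²) ≤ f² / k` (`second_order_le_sq`), which is at most `(n / k) min (f, f²)`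
  where `f ≤ n`;
* `0 ≤ Φ s - Φ a ≤ 1`, so the integrand is at most `h ≤ ρ m * f` (`second_order_le_linear`),
  which is used where `f > n`.

Integrating the resulting pointwise bound gives the claim.
-/


open MeasureTheory Set Filter

section Remainder

variable {Φ : ℝ → ℝ}

lemma second_order_eq (hΦ : Continuous Φ) (a h : ℝ) :
    (∫ y in (0:ℝ)..(a + h), Φ y) - (∫ y in (0:ℝ)..a, Φ y) - Φ a * h
      = ∫ s in a..(a + h), (Φ s - Φ a) := by
  rw [intervalIntegral.integral_interval_sub_left (hΦ.intervalIntegrable _ _)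
    (hΦ.intervalIntegrable _ _),
    intervalIntegral.integral_sub (hΦ.intervalIntegrable _ _) (by simp)]
  simp
  ring

lemma second_order_nonneg (hΦ : Continuous Φ) (hmono : Monotone Φ) {a h : ℝ} (hh : 0 ≤ h) :
    0 ≤ (∫ y in (0:ℝ)..(a + h), Φ y) - (∫ y in (0:ℝ)..a, Φ y) - Φ a * h := by
  rw [second_order_eq hΦ]
  exact intervalIntegral.integral_nonneg (by linarith) fun s hs => sub_nonneg.2 (hmono hs.1)

lemma second_order_le_linear (hΦ : Continuous Φ) {a h : ℝ} (hh : 0 ≤ h)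
    (hone : ∀ s, a ≤ s → Φ s - Φ a ≤ 1) :
    (∫ y in (0:ℝ)..(a + h), Φ y) - (∫ y in (0:ℝ)..a, Φ y) - Φ a * h ≤ h := by
  rw [second_order_eq hΦ]
  calc ∫ s in a..(a + h), (Φ s - Φ a) ≤ ∫ s in a..(a + h), (1:ℝ) :=
        intervalIntegral.integral_mono_on (by linarith)
          ((hΦ.sub continuous_const).intervalIntegrable _ _) (by simp)
          fun s hs => hone s hs.1
    _ = h := by simp

lemma second_order_le_sq (hΦ : Continuous Φ) {a h C : ℝ} (hh : 0 ≤ h)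
    (hC : ∀ s, a ≤ s → Φ s - Φ a ≤ C * (s - a)) :
    (∫ y in (0:ℝ)..(a + h), Φ y) - (∫ y in (0:ℝ)..a, Φ y) - Φ a * h ≤ C * h ^ 2 / 2 := by
  rw [second_order_eq hΦ]
  calc ∫ s in a..(a + h), (Φ s - Φ a) ≤ ∫ s in a..(a + h), C * (s - a) :=
        intervalIntegral.integral_mono_on (by linarith)
          ((hΦ.sub continuous_const).intervalIntegrable _ _)
          ((by fun_prop : Continuous fun s => C * (s - a)).intervalIntegrable _ _)
          fun s hs => hC s hs.1
    _ = C * h ^ 2 / 2 := by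
        rw [intervalIntegral.integral_const_mul,
          intervalIntegral.integral_comp_sub_right (fun s => s) a]
        simp
        ring

/-- The increment of `φ = G ∘ |·|`, with `G' = Φ`, depends only on `|d|` and `|l|` when `d ≠ 0` and
`l` have the same sign. -/
lemma integrand_eq (hΦ : Continuous Φ) {φ : ℝ → ℝ} (hφ : ∀ x, φ x = ∫ y in (0:ℝ)..|x|, Φ y)
    {d l : ℝ} (hd : (0 < d ∧ 0 ≤ l) ∨ (d < 0 ∧ l ≤ 0)) :
    φ (d + l) - φ d - deriv φ d * l
      = (∫ y in (0:ℝ)..(|d| + |l|), Φ y) - (∫ y in (0:ℝ)..|d|, Φ y) - Φ |d| * |l| := by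
  have hG : ∀ x, HasDerivAt (fun x => ∫ y in (0:ℝ)..x, Φ y) (Φ x) x := fun x =>
    hΦ.integral_hasStrictDerivAt 0 x |>.hasDerivAt
  rcases hd with ⟨hd, hl⟩ | ⟨hd, hl⟩
  · have hder : HasDerivAt φ (Φ d) d := by
      refine (hG d).congr_of_eventuallyEq ?_
      filter_upwards [lt_mem_nhds hd] with t ht
      rw [hφ, abs_of_pos ht]
    rw [hder.deriv, hφ, hφ, abs_of_pos hd, abs_of_nonneg hl, abs_of_pos (by linarith : 0 < d + l)]
  · have hder : HasDerivAt φ (-Φ (-d)) d := by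
      have h := (hG (-d)).scomp d (hasDerivAt_neg d)
      have h' : HasDerivAt ((fun x => ∫ y in (0:ℝ)..x, Φ y) ∘ fun t => -t) (-Φ (-d)) d := by
        simpa using h
      refine h'.congr_of_eventuallyEq ?_
      filter_upwards [gt_mem_nhds hd] with t ht
      rw [hφ, abs_of_neg ht, Function.comp]
    rw [hder.deriv, hφ, hφ, abs_of_neg hd, abs_of_nonpos hl, abs_of_neg (by linarith : d + l < 0),
      neg_add]
    ring

end Remainder

/-- Estimate on `∫_U D_{l(x,y;u)} φ_k(x-y) μ(du)` under condition (3.c):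
the integral is bounded by `(n/k) ∫ min(f, f²) dμ + ρ(m) ∫_{f > n} f dμ`. -/
theorem stmt9 {U : Type*} [MeasurableSpace U] (μ : Measure U)
    (k : ℕ) (hk : 1 ≤ k) (ak akm1 : ℝ)
    (hak : 0 < ak) (haka : ak < akm1) (hakm1 : akm1 ≤ 1)
    (ψ : ℝ → ℝ) (hψ_cont : Continuous ψ) (hψ_nonneg : ∀ z, 0 ≤ ψ z)
    (hψ_supp : ∀ z, z ∉ Ioo ak akm1 → ψ z = 0)
    (hψ_int : (∫ z, ψ z) = 1)
    (φ : ℝ → ℝ) (hφ : ∀ x, φ x = ∫ y in (0:ℝ)..|x|, ∫ z in (0:ℝ)..y, ψ z)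
    (ρ : ℝ → ℝ) (hρ_nonneg : ∀ z, 0 ≤ z → 0 ≤ ρ z)
    (hρ_mono : MonotoneOn ρ (Ici 0)) (hρ_pos : ∀ z, 0 < z → 0 < ρ z)
    (hψρ : ∀ z ∈ Ioo ak akm1, ψ z ≤ (2 / k) * ((ρ z) ^ 2)⁻¹)
    (m : ℝ) (hm : 1 ≤ m)
    (f : U → ℝ) (hf_meas : Measurable f) (hf_nonneg : ∀ u, 0 ≤ f u)
    (hf_int : Integrable (fun u => min (f u) ((f u) ^ 2)) μ)
    (g : ℝ → U → ℝ)
    (hg_meas : ∀ x ∈ Icc (0:ℝ) m, Measurable (g x))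
    (hg_nonneg : ∀ x ∈ Icc (0:ℝ) m, ∀ u, 0 ≤ g x u)
    (hg_mono : ∀ u : U, ∀ x ∈ Icc (0:ℝ) m, ∀ y ∈ Icc (0:ℝ) m, x ≤ y → g x u ≤ g y u)
    (hg_lip : ∀ x ∈ Icc (0:ℝ) m, ∀ y ∈ Icc (0:ℝ) m, ∀ u : U,
      |g x u - g y u| ≤ ρ |x - y| * f u)
    (n : ℝ) (hn : 1 ≤ n) :
    ∀ x ∈ Icc (0:ℝ) m, ∀ y ∈ Icc (0:ℝ) m, x ≠ y →
      (∫ u, (φ (x - y + (g x u - g y u)) - φ (x - y)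
          - deriv φ (x - y) * (g x u - g y u)) ∂μ)
        ≤ (n / k) * (∫ u, min (f u) ((f u) ^ 2) ∂μ)
          + ρ m * ∫ u in {u : U | f u > n}, f u ∂μ := by
  intro x hx y hy hxy
  set Φ : ℝ → ℝ := fun y => ∫ z in (0:ℝ)..y, ψ z with hΦdef
  have hk0 : (0:ℝ) < k := by exact_mod_cast hk
  have hii : ∀ a b : ℝ, IntervalIntegrable ψ volume a b := fun a b =>
    hψ_cont.intervalIntegrable a b
  have hψi : Integrable ψ := by
    by_contra h
    rw [integral_undef h] at hψ_int
    exact zero_ne_one hψ_int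
  have hΦ : Continuous Φ := intervalIntegral.continuous_primitive hii 0
  have hsub : ∀ a s, Φ s - Φ a = ∫ z in a..s, ψ z := fun a s =>
    intervalIntegral.integral_interval_sub_left (hii _ _) (hii _ _)
  have hmono : Monotone Φ := fun a s has => by
    rw [← sub_nonneg, hsub]
    exact intervalIntegral.integral_nonneg has fun z _ => hψ_nonneg z
  have hone : ∀ a s, a ≤ s → Φ s - Φ a ≤ 1 := fun a s has => by
    rw [hsub, intervalIntegral.integral_of_le has, ← hψ_int]
    exact setIntegral_le_integral hψi (ae_of_all _ hψ_nonneg)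
  set a := |x - y| with ha
  have ha0 : 0 < a := abs_pos.2 (sub_ne_zero.2 hxy)
  have ham : a ≤ m := abs_le.2 ⟨by linarith [hx.1, hy.2], by linarith [hx.2, hy.1]⟩
  have hρa := hρ_pos a ha0
  have hρam : ρ a ≤ ρ m := hρ_mono ha0.le (ha0.le.trans ham) ham
  set C : ℝ := (2 / k) * ((ρ a) ^ 2)⁻¹ with hCdef
  have hψC : ∀ z, a ≤ z → ψ z ≤ C := fun z hz => by
    by_cases hzI : z ∈ Ioo ak akm1
    · refine (hψρ z hzI).trans ?_
      have : ρ a ≤ ρ z := hρ_mono ha0.le (ha0.le.trans hz) hz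
      rw [hCdef]
      gcongr
    · rw [hψ_supp z hzI]
      positivity
  have hC : ∀ s, a ≤ s → Φ s - Φ a ≤ C * (s - a) := fun s has => by
    rw [hsub]
    calc ∫ z in a..s, ψ z ≤ ∫ z in a..s, C :=
          intervalIntegral.integral_mono_on has (hii _ _) (by simp) fun z hz => hψC z hz.1
      _ = C * (s - a) := by simp [mul_comm]
  have hsign : ∀ u, (0 < x - y ∧ 0 ≤ g x u - g y u) ∨ (x - y < 0 ∧ g x u - g y u ≤ 0) := fun u => by
    rcases lt_or_gt_of_ne hxy with h | h
    · exact Or.inr ⟨by linarith, by linarith [hg_mono u x hx y hy h.le]⟩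
    · exact Or.inl ⟨by linarith, by linarith [hg_mono u y hy x hx h.le]⟩
  have hS : MeasurableSet {u : U | f u > n} := measurableSet_lt measurable_const hf_meas
  -- Since `n ≥ 1`, `f` coincides with `min (f, f²)` on `{f > n}`, hence is integrable there.
  have hfS : IntegrableOn f {u : U | f u > n} μ := by
    refine hf_int.integrableOn.congr_fun (fun u hu => ?_) hS
    have hu' : n < f u := hu
    exact min_eq_left (by nlinarith)
  have hI1 : Integrable (fun u => (n / k) * min (f u) ((f u) ^ 2)) μ := hf_int.const_mul _
  have hI2 : Integrable ({u : U | f u > n}.indicator fun u => ρ m * f u) μ :=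
    (integrable_indicator_iff hS).2 (hfS.const_mul _)
  rw [← integral_const_mul, ← integral_const_mul, ← integral_indicator hS, ← integral_add hI1 hI2]
  refine integral_mono_of_nonneg (ae_of_all _ fun u => ?_) (hI1.add hI2) (ae_of_all _ fun u => ?_)
  · simp only [Pi.zero_apply]
    rw [integrand_eq hΦ hφ (hsign u)]
    exact second_order_nonneg hΦ hmono (abs_nonneg _)
  · simp only
    rw [integrand_eq hΦ hφ (hsign u), ← ha]
    have hl := hg_lip x hx y hy u
    rw [← ha] at hl
    have hf0 := hf_nonneg u
    set h := |g x u - g y u|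
    have hh : 0 ≤ h := abs_nonneg _
    by_cases hu : n < f u
    · rw [indicator_of_mem (show u ∈ {u : U | f u > n} from hu)]
      have h1 := second_order_le_linear hΦ hh (hone a)
      have h2 : ρ a * f u ≤ ρ m * f u := by gcongr
      have h3 : 0 ≤ (n / k) * min (f u) ((f u) ^ 2) := by positivity
      linarith
    · rw [indicator_of_notMem (show u ∉ {u : U | f u > n} from hu), add_zero]
      have h1 := second_order_le_sq hΦ hh hC
      have h2 : C * h ^ 2 / 2 ≤ (f u) ^ 2 / k := by
        calc C * h ^ 2 / 2 ≤ C * (ρ a * f u) ^ 2 / 2 := by gcongr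
          _ = (f u) ^ 2 / k := by rw [hCdef]; field_simp
      have h3 : (f u) ^ 2 ≤ n * min (f u) ((f u) ^ 2) := by
        rw [mul_min_of_nonneg _ _ (by linarith)]
        exact le_min (by nlinarith) (by nlinarith [sq_nonneg (f u)])
      have h4 : (f u) ^ 2 / k ≤ (n / k) * min (f u) ((f u) ^ 2) := by
        rw [div_mul_eq_mul_div]
        gcongr
      linarith
end

section
/- For every ε > 0 there exists an integer K ≥ 1 such that for all k ≥ K and all x, y ∈ [0,m], writing l(x,y;u) = g(x,u) − g(y,u), one has ∫_U [ φ_k(x − y + l(x,y;u)) − φ_k(x − y) − φ_k′(x − y) l(x,y;u) ] μ(du) ≤ ε; that is, these integrals converge to 0 as k → ∞, uniformly in x, y ∈ [0,m]. -/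
open MeasureTheory Set Filter

/-!
Write `G y = ∫ z in 0..y, ψ z`, so `φ' = G` on `(0, ∞)`. By evenness of `φ` and monotonicity of `g`
one may take `w = x - y > 0` and `h = g x u - g y u ≥ 0`, and then the integrand equals
`∫ y in w..w+h, (G y - G w)`. It is non-negative and has two upper bounds:

* `h ≤ ρ 1 * f u`, because `0 ≤ G ≤ 1` and the integrand vanishes for `w ≥ 1`;
* `c * h ^ 2 / 2` whenever `ψ ≤ c` on `[w, ∞)`; monotonicity of `ρ` allows `c = (2/k) / ρ(w)²`, and
  `h ≤ ρ(w) f(u)` turns the bound into `f(u)² / k`.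

So the integrand is at most `min (f² / k) (ρ 1 * f)`, uniformly in `x` and `y`. This majorant tends
to zero pointwise and is dominated by a multiple of `min f f²`, so its integral tends to zero by
dominated convergence.
-/

/-- `D_h φ(w) = φ(w + h) - φ(w) - φ'(w) h`, the integrand of the theorem. -/
noncomputable def taylorDefect (φ : ℝ → ℝ) (w h : ℝ) : ℝ :=
  φ (w + h) - φ w - deriv φ w * h

lemma taylorDefect_neg {φ : ℝ → ℝ} (heven : ∀ x, φ (-x) = φ x) (w h : ℝ) :
    taylorDefect φ (-w) (-h) = taylorDefect φ w h := by
  have hd : deriv φ (-w) = -deriv φ w := by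
    have h1 := deriv_comp_neg φ w
    simp only [heven] at h1
    linarith
  have h2 : φ (-w + -h) = φ (w + h) := by
    rw [← heven (w + h)]
    congr 1
    ring
  simp only [taylorDefect, hd, h2, heven]
  ring

lemma taylorDefect_eq_integral {ψ φ : ℝ → ℝ} (hψ : Continuous ψ)
    (hφ : ∀ x, φ x = ∫ y in (0:ℝ)..|x|, ∫ z in (0:ℝ)..y, ψ z) {w h : ℝ} (hw : 0 < w)
    (hh : 0 ≤ h) :
    taylorDefect φ w h = ∫ y in w..(w + h), ∫ z in w..y, ψ z := by
  have hii : ∀ p q, IntervalIntegrable ψ volume p q := fun p q => hψ.intervalIntegrable p q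
  have hG : Continuous fun y : ℝ => ∫ z in (0:ℝ)..y, ψ z :=
    intervalIntegral.continuous_primitive hii 0
  have hd : deriv φ w = ∫ z in (0:ℝ)..w, ψ z := by
    have h1 : HasDerivAt (fun x => ∫ y in (0:ℝ)..x, ∫ z in (0:ℝ)..y, ψ z)
        (∫ z in (0:ℝ)..w, ψ z) w :=
      intervalIntegral.integral_hasDerivAt_right (hG.intervalIntegrable _ _)
        (hG.stronglyMeasurableAtFilter _ _) hG.continuousAt
    refine (h1.congr_of_eventuallyEq ?_).deriv
    filter_upwards [lt_mem_nhds hw] with x hx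
    rw [hφ, abs_of_pos hx]
  have hinner : ∀ y, ∫ z in w..y, ψ z = (∫ z in (0:ℝ)..y, ψ z) - ∫ z in (0:ℝ)..w, ψ z := fun y =>
    (intervalIntegral.integral_interval_sub_left (hii _ _) (hii _ _)).symm
  simp only [hinner]
  rw [intervalIntegral.integral_sub (hG.intervalIntegrable _ _) (by simp),
    intervalIntegral.integral_const, taylorDefect, hd, hφ, hφ, abs_of_pos hw,
    abs_of_nonneg (by linarith : 0 ≤ w + h),
    intervalIntegral.integral_interval_sub_left (hG.intervalIntegrable _ _)
      (hG.intervalIntegrable _ _)]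
  simp
  ring

/-- The Taylor defect is non-negative, with two upper bounds: linear in `h` because `φ' ≤ 1`, and
quadratic in `h` because `φ'' = ψ ≤ c` to the right of `w`. -/
lemma taylorDefect_bounds {ψ φ : ℝ → ℝ} (hψ : Continuous ψ) (hψ0 : ∀ z, 0 ≤ ψ z)
    (hψ1 : ∫ z, ψ z = 1)
    (hφ : ∀ x, φ x = ∫ y in (0:ℝ)..|x|, ∫ z in (0:ℝ)..y, ψ z) {w h c : ℝ} (hw : 0 < w)
    (hh : 0 ≤ h) (hc : ∀ z, w ≤ z → ψ z ≤ c) :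
    0 ≤ taylorDefect φ w h ∧ taylorDefect φ w h ≤ h ∧ taylorDefect φ w h ≤ c * h ^ 2 / 2 := by
  have hψ_integrable : Integrable ψ := by
    by_contra hn
    rw [integral_undef hn] at hψ1
    norm_num at hψ1
  have hii : ∀ p q, IntervalIntegrable ψ volume p q := fun p q => hψ.intervalIntegrable p q
  have hG : Continuous fun y : ℝ => ∫ z in w..y, ψ z :=
    intervalIntegral.continuous_primitive hii w
  have hle : w ≤ w + h := by linarith
  rw [taylorDefect_eq_integral hψ hφ hw hh]
  refine ⟨?_, ?_, ?_⟩
  · exact intervalIntegral.integral_nonneg hle fun y hy =>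
      intervalIntegral.integral_nonneg hy.1 fun z _ => hψ0 z
  · calc ∫ y in w..(w + h), ∫ z in w..y, ψ z ≤ ∫ y in w..(w + h), (1:ℝ) := by
          refine intervalIntegral.integral_mono_on hle (hG.intervalIntegrable _ _) (by simp) ?_
          intro y hy
          rw [intervalIntegral.integral_of_le hy.1, ← hψ1]
          exact setIntegral_le_integral hψ_integrable (ae_of_all _ hψ0)
      _ = h := by simp
  · calc ∫ y in w..(w + h), ∫ z in w..y, ψ z ≤ ∫ y in w..(w + h), c * (y - w) := by
          refine intervalIntegral.integral_mono_on hle (hG.intervalIntegrable _ _)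
            ((by fun_prop : Continuous fun y : ℝ => c * (y - w)).intervalIntegrable _ _) ?_
          intro y hy
          calc ∫ z in w..y, ψ z ≤ ∫ z in w..y, c :=
                intervalIntegral.integral_mono_on hy.1 (hii _ _) (by simp) fun z hz => hc z hz.1
            _ = c * (y - w) := by simp; ring
      _ = c * h ^ 2 / 2 := by
          rw [intervalIntegral.integral_const_mul, intervalIntegral.integral_comp_sub_right
            (fun y => y) w, integral_id]
          ring

/-- The majorants `min (f² / k) (C f)` are integrable and their integrals tend to zero. -/
lemma tendsto_integral_majorant {U : Type*} [MeasurableSpace U] {μ : Measure U} {f : U → ℝ}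
    (hf_meas : Measurable f) (hf_nonneg : ∀ u, 0 ≤ f u)
    (hf_int : Integrable (fun u => min (f u) ((f u) ^ 2)) μ) {C : ℝ} (hC : 0 ≤ C) :
    (∀ k : ℕ, 1 ≤ k → Integrable (fun u => min (f u ^ 2 / k) (C * f u)) μ) ∧
      Tendsto (fun k : ℕ => ∫ u, min (f u ^ 2 / k) (C * f u) ∂μ) atTop (nhds 0) := by
  have hmeas : ∀ k : ℕ, AEStronglyMeasurable (fun u => min (f u ^ 2 / k) (C * f u)) μ :=
    fun k => (by fun_prop : Measurable fun u => min (f u ^ 2 / k) (C * f u)).aestronglyMeasurable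
  have hbd : ∀ k : ℕ, 1 ≤ k → ∀ u,
      ‖min (f u ^ 2 / k) (C * f u)‖ ≤ (1 + C) * min (f u) (f u ^ 2) := by
    intro k hk u
    have h0 := hf_nonneg u
    have hk' : (1:ℝ) ≤ k := by exact_mod_cast hk
    rw [Real.norm_of_nonneg (le_min (by positivity) (by positivity))]
    rcases le_total (f u) 1 with h | h
    · rw [min_eq_right (by nlinarith : f u ^ 2 ≤ f u)]
      calc min (f u ^ 2 / k) (C * f u) ≤ f u ^ 2 / k := min_le_left _ _
        _ ≤ f u ^ 2 := div_le_self (by positivity) hk'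
        _ ≤ (1 + C) * f u ^ 2 := by nlinarith [mul_nonneg hC (sq_nonneg (f u))]
    · rw [min_eq_left (by nlinarith : f u ≤ f u ^ 2)]
      calc min (f u ^ 2 / k) (C * f u) ≤ C * f u := min_le_right _ _
        _ ≤ (1 + C) * f u := by nlinarith
  have hdom : Integrable (fun u => (1 + C) * min (f u) (f u ^ 2)) μ := hf_int.const_mul _
  refine ⟨fun k hk => hdom.mono' (hmeas k) (ae_of_all _ (hbd k hk)), ?_⟩
  have := tendsto_integral_filter_of_dominated_convergence
    (F := fun (k : ℕ) u => min (f u ^ 2 / k) (C * f u)) (f := fun _ => (0:ℝ)) (l := atTop)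
    (μ := μ) _ (Eventually.of_forall hmeas)
    ((eventually_ge_atTop 1).mono fun k hk => ae_of_all _ (hbd k hk)) hdom
    (ae_of_all _ fun u => by
      have h1 : Tendsto (fun k : ℕ => f u ^ 2 / (k:ℝ)) atTop (nhds 0) :=
        tendsto_const_div_atTop_nhds_zero_nat _
      have h2 := h1.min (tendsto_const_nhds (x := C * f u))
      rwa [min_eq_left (mul_nonneg hC (hf_nonneg u))] at h2)
  simpa using this

/-- Under condition (3.c), `∫_U D_{l(x,y;u)} φ_k(x-y) μ(du) → 0` as `k → ∞`,
uniformly in `x, y ∈ [0,m]`. -/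
theorem stmt10 {U : Type*} [MeasurableSpace U] (μ : Measure U)
    (a : ℕ → ℝ) (ψ : ℕ → ℝ → ℝ) (φ : ℕ → ℝ → ℝ)
    (ha_pos : ∀ j, 0 < a j) (ha_anti : StrictAnti a) (ha0 : a 0 = 1)
    (ha_lim : Tendsto a atTop (nhds 0))
    (hψ_cont : ∀ k, 1 ≤ k → Continuous (ψ k))
    (hψ_nonneg : ∀ k, 1 ≤ k → ∀ z, 0 ≤ ψ k z)
    (hψ_supp : ∀ k, 1 ≤ k → ∀ z, z ∉ Ioo (a k) (a (k - 1)) → ψ k z = 0)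
    (hψ_int : ∀ k, 1 ≤ k → (∫ z, ψ k z) = 1)
    (hφ : ∀ k x, φ k x = ∫ y in (0:ℝ)..|x|, ∫ z in (0:ℝ)..y, ψ k z)
    (ρ : ℝ → ℝ) (hρ_nonneg : ∀ z, 0 ≤ z → 0 ≤ ρ z)
    (hρ_mono : MonotoneOn ρ (Ici 0)) (hρ_pos : ∀ z, 0 < z → 0 < ρ z)
    (hψρ : ∀ k, 1 ≤ k → ∀ z ∈ Ioo (a k) (a (k - 1)), ψ k z ≤ (2 / k) * ((ρ z) ^ 2)⁻¹)
    (m : ℝ) (hm : 1 ≤ m)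
    (f : U → ℝ) (hf_meas : Measurable f) (hf_nonneg : ∀ u, 0 ≤ f u)
    (hf_int : Integrable (fun u => min (f u) ((f u) ^ 2)) μ)
    (g : ℝ → U → ℝ)
    (hg_meas : ∀ x ∈ Icc (0:ℝ) m, Measurable (g x))
    (hg_nonneg : ∀ x ∈ Icc (0:ℝ) m, ∀ u, 0 ≤ g x u)
    (hg_mono : ∀ u : U, ∀ x ∈ Icc (0:ℝ) m, ∀ y ∈ Icc (0:ℝ) m, x ≤ y → g x u ≤ g y u)
    (hg_lip : ∀ x ∈ Icc (0:ℝ) m, ∀ y ∈ Icc (0:ℝ) m, ∀ u : U,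
      |g x u - g y u| ≤ ρ |x - y| * f u) :
    ∀ ε : ℝ, 0 < ε → ∃ K : ℕ, 1 ≤ K ∧ ∀ k : ℕ, K ≤ k →
      ∀ x ∈ Icc (0:ℝ) m, ∀ y ∈ Icc (0:ℝ) m,
        (∫ u, (φ k (x - y + (g x u - g y u)) - φ k (x - y)
            - deriv (φ k) (x - y) * (g x u - g y u)) ∂μ) ≤ ε := by
  intro ε hε
  obtain ⟨hBint, hBlim⟩ :=
    tendsto_integral_majorant hf_meas hf_nonneg hf_int (hρ_nonneg 1 zero_le_one)
  obtain ⟨K, hK⟩ := eventually_atTop.1 (hBlim.eventually_lt_const hε)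
  refine ⟨max K 1, le_max_right _ _, fun k hkK x hx y hy => ?_⟩
  have hk : 1 ≤ k := (le_max_right _ _).trans hkK
  have hk0 : (0:ℝ) < k := by exact_mod_cast hk
  have ha1 : a (k - 1) ≤ 1 := ha0 ▸ ha_anti.antitone (Nat.zero_le _)
  have heven : ∀ z, φ k (-z) = φ k z := fun z => by rw [hφ, hφ, abs_neg]
  have hpos : ∀ w h t : ℝ, 0 < w → 0 ≤ h → 0 ≤ t → h ≤ ρ w * t →
      0 ≤ taylorDefect (φ k) w h ∧ taylorDefect (φ k) w h ≤ min (t ^ 2 / k) (ρ 1 * t) := by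
    intro w h t hw hh ht hht
    have hbds := fun c hc => taylorDefect_bounds (c := c) (hψ_cont k hk) (hψ_nonneg k hk)
      (hψ_int k hk) (hφ k) hw hh hc
    rcases le_total w 1 with hw1 | hw1
    · have hρw := hρ_pos w hw
      obtain ⟨h0, h1, h2⟩ := hbds (2 / k * ((ρ w) ^ 2)⁻¹) (fun z hz => by
        by_cases hzm : z ∈ Ioo (a k) (a (k - 1))
        · refine (hψρ k hk z hzm).trans ?_
          have : ρ w ≤ ρ z := hρ_mono hw.le (hw.le.trans hz) hz
          gcongr
        · rw [hψ_supp k hk z hzm]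
          positivity)
      refine ⟨h0, le_min (h2.trans ?_) (h1.trans (hht.trans ?_))⟩
      · calc 2 / k * ((ρ w) ^ 2)⁻¹ * h ^ 2 / 2
            ≤ 2 / k * ((ρ w) ^ 2)⁻¹ * (ρ w * t) ^ 2 / 2 := by gcongr
          _ = t ^ 2 / k := by field_simp
      · exact mul_le_mul_of_nonneg_right (hρ_mono hw.le (zero_le_one' ℝ) hw1) ht
    · -- Here `w` lies to the right of the support of `ψ k`, so the constant `c = 0` is admissible.
      obtain ⟨h0, -, h2⟩ := hbds 0 (fun z hz =>
        (hψ_supp k hk z fun hzm => absurd hzm.2 (by linarith)).le)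
      refine ⟨h0, h2.trans ?_⟩
      have := hρ_nonneg 1 zero_le_one
      simp only [zero_mul, zero_div]
      exact le_min (by positivity) (by positivity)
  have hpt : ∀ u, 0 ≤ taylorDefect (φ k) (x - y) (g x u - g y u) ∧
      taylorDefect (φ k) (x - y) (g x u - g y u) ≤ min (f u ^ 2 / k) (ρ 1 * f u) := by
    intro u
    have hlip := hg_lip x hx y hy u
    rcases lt_trichotomy y x with hxy | hxy | hxy
    · rw [abs_of_pos (sub_pos.2 hxy)] at hlip
      exact hpos _ _ _ (sub_pos.2 hxy) (sub_nonneg.2 (hg_mono u y hy x hx hxy.le))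
        (hf_nonneg u) ((le_abs_self _).trans hlip)
    · have := hρ_nonneg 1 zero_le_one
      have := hf_nonneg u
      subst hxy
      simp only [taylorDefect, sub_self, add_zero, mul_zero, le_refl, true_and]
      exact le_min (by positivity) (by positivity)
    · rw [abs_sub_comm, abs_sub_comm x y, abs_of_pos (sub_pos.2 hxy)] at hlip
      rw [← taylorDefect_neg heven, neg_sub, neg_sub]
      exact hpos _ _ _ (sub_pos.2 hxy) (sub_nonneg.2 (hg_mono u x hx y hy hxy.le))
        (hf_nonneg u) ((le_abs_self _).trans hlip)
  exact (integral_mono_of_nonneg (ae_of_all _ fun u => (hpt u).1) (hBint k hk)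
    (ae_of_all _ fun u => (hpt u).2)).trans (hK k ((le_max_left _ _).trans hkK)).le
end

section
/- For all ζ > 0 and h ≥ 0, one has 0 ≤ φ̃_k(ζ + h) − φ̃_k(ζ) − φ̃_k′(ζ) h ≤ min( k^{−1} h² ρ(ζ)^{−2}, h ). -/
/-!
With `g y = ∫₀^y ψ`, the function `φ` is a primitive of the continuous function `g`, so `φ' = g` and
the first-order Taylor remainder equals `∫_ζ^{ζ+h} (g y - g ζ) dy`, where `g y - g ζ = ∫_ζ^y ψ`.
This increment is nonnegative, at most the total mass `1` of `ψ`, and at most `C (y - ζ)` with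
`C = (2/k) ρ(ζ)⁻²`, since `ψ ≤ C` on `[ζ, ∞)` by monotonicity of `ρ`. Integrating these bounds
over `[ζ, ζ + h]` gives `0`, `h` and `C h² / 2 = k⁻¹ h² ρ(ζ)⁻²` respectively.
-/

open MeasureTheory Set Filter

/-- For `ζ > 0` and `h ≥ 0`: `0 ≤ D_h φ̃_k(ζ) ≤ min(k⁻¹ h² ρ(ζ)⁻², h)`. -/
theorem stmt12 (k : ℕ) (hk : 1 ≤ k) (ak akm1 : ℝ)
    (hak : 0 < ak) (haka : ak < akm1) (hakm1 : akm1 ≤ 1)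
    (ψ : ℝ → ℝ) (hψ_cont : Continuous ψ) (hψ_nonneg : ∀ z, 0 ≤ ψ z)
    (hψ_supp : ∀ z, z ∉ Ioo ak akm1 → ψ z = 0)
    (hψ_int : (∫ z, ψ z) = 1)
    (φ : ℝ → ℝ) (hφ : ∀ x, φ x = ∫ y in (0:ℝ)..x, ∫ z in (0:ℝ)..y, ψ z)
    (ρ : ℝ → ℝ) (hρ_nonneg : ∀ z, 0 ≤ z → 0 ≤ ρ z)
    (hρ_mono : MonotoneOn ρ (Ici 0)) (hρ_pos : ∀ z, 0 < z → 0 < ρ z)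
    (hψρ : ∀ z ∈ Ioo ak akm1, ψ z ≤ (2 / k) * ((ρ z) ^ 2)⁻¹) :
    ∀ ζ h : ℝ, 0 < ζ → 0 ≤ h →
      0 ≤ φ (ζ + h) - φ ζ - deriv φ ζ * h ∧
      φ (ζ + h) - φ ζ - deriv φ ζ * h
        ≤ min ((k : ℝ)⁻¹ * h ^ 2 * ((ρ ζ) ^ 2)⁻¹) h := by
  intro ζ h hζ hh
  set g : ℝ → ℝ := fun y => ∫ z in (0:ℝ)..y, ψ z with hg
  have hψ_ii : ∀ a b, IntervalIntegrable ψ volume a b := fun a b =>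
    hψ_cont.intervalIntegrable a b
  -- A non-integrable function has Bochner integral `0`, so `hψ_int` forces integrability.
  have hψ_integrable : Integrable ψ := by
    by_contra hn
    rw [integral_undef hn] at hψ_int
    exact zero_ne_one hψ_int
  have hg_cont : Continuous g := intervalIntegral.continuous_primitive hψ_ii 0
  have hg_ii : ∀ a b, IntervalIntegrable g volume a b := fun a b =>
    hg_cont.intervalIntegrable a b
  have hφg : φ = fun x => ∫ y in (0:ℝ)..x, g y := funext hφ
  have hderiv : deriv φ ζ = g ζ := by
    rw [hφg]
    exact hg_cont.deriv_integral g 0 ζ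
  have hrem : φ (ζ + h) - φ ζ - deriv φ ζ * h = ∫ y in ζ..(ζ + h), (g y - g ζ) := by
    rw [hderiv, intervalIntegral.integral_sub (hg_ii _ _) intervalIntegrable_const,
      intervalIntegral.integral_const, hφg]
    simp only
    rw [intervalIntegral.integral_interval_sub_left (hg_ii _ _) (hg_ii _ _), smul_eq_mul]
    ring
  have hle : ζ ≤ ζ + h := by linarith
  have hdiff : ∀ y, g y - g ζ = ∫ z in ζ..y, ψ z := fun y =>
    intervalIntegral.integral_interval_sub_left (hψ_ii _ _) (hψ_ii _ _)
  have hii : IntervalIntegrable (fun y => g y - g ζ) volume ζ (ζ + h) :=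
    (hg_cont.sub continuous_const).intervalIntegrable _ _
  have hdiff_le_one : ∀ y, ζ ≤ y → g y - g ζ ≤ 1 := by
    intro y hy
    rw [hdiff, intervalIntegral.integral_of_le hy, ← hψ_int]
    exact setIntegral_le_integral hψ_integrable (Eventually.of_forall hψ_nonneg)
  set C : ℝ := (2 / k) * ((ρ ζ) ^ 2)⁻¹ with hC
  -- Monotonicity of `ρ` transfers the pointwise bound on `ψ z` to the left endpoint `ζ`.
  have hψC : ∀ z, ζ ≤ z → ψ z ≤ C := by
    intro z hz
    by_cases hzm : z ∈ Ioo ak akm1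
    · refine (hψρ z hzm).trans ?_
      have hpos := hρ_pos ζ hζ
      have hmono : ρ ζ ≤ ρ z := hρ_mono hζ.le (hζ.le.trans hz) hz
      rw [hC]
      gcongr
    · rw [hψ_supp z hzm]
      positivity
  have hdiff_le : ∀ y, ζ ≤ y → g y - g ζ ≤ C * (y - ζ) := by
    intro y hy
    rw [hdiff]
    calc ∫ z in ζ..y, ψ z ≤ ∫ _ in ζ..y, C :=
          intervalIntegral.integral_mono_on hy (hψ_ii _ _) intervalIntegrable_const
            fun z hz => hψC z hz.1
      _ = C * (y - ζ) := by
          rw [intervalIntegral.integral_const, smul_eq_mul, mul_comm]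
  rw [hrem]
  refine ⟨?_, le_min ?_ ?_⟩
  · refine intervalIntegral.integral_nonneg hle fun y hy => ?_
    rw [hdiff]
    exact intervalIntegral.integral_nonneg hy.1 fun z _ => hψ_nonneg z
  · calc ∫ y in ζ..(ζ + h), (g y - g ζ) ≤ ∫ y in ζ..(ζ + h), C * (y - ζ) :=
          intervalIntegral.integral_mono_on hle hii
            (by apply Continuous.intervalIntegrable; fun_prop) fun y hy => hdiff_le y hy.1
      _ = C * (h ^ 2 / 2) := by
          rw [intervalIntegral.integral_const_mul,
            intervalIntegral.integral_comp_sub_right (fun y => y), integral_id]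
          ring
      _ = (k : ℝ)⁻¹ * h ^ 2 * ((ρ ζ) ^ 2)⁻¹ := by
          rw [hC]
          ring
  · calc ∫ y in ζ..(ζ + h), (g y - g ζ) ≤ ∫ _ in ζ..(ζ + h), (1 : ℝ) :=
          intervalIntegral.integral_mono_on hle hii intervalIntegrable_const
            fun y hy => hdiff_le_one y hy.1
      _ = h := by simp
end

section
/- Let (U, 𝒜, μ) be a measure space, let M > 0 and m ≥ 1 be real numbers, let ρ : [0,∞) → [0,∞) be non-decreasing with ∫_{(ε,1]} ρ(z)^{−2} dz → ∞ as ε ↓ 0, and let g : [0,M] × U → [0,∞) be such that u ↦ g(x,u) is measurable for every x ∈ [0,M], x ↦ g(x,u) is non-decreasing for every u ∈ U, ∫_U min(g(M,u), g(M,u)²) μ(du) < ∞, and ∫_U min(|g(x,u) − g(y,u)|, (g(x,u) − g(y,u))²) μ(du) ≤ ρ(|x − y|)² for all x, y ∈ [0,M]. Then the function β : [0,M] → ℝ defined by β(x) = ∫_U ( g(x,u) − min(g(x,u), m) ) μ(du) is well defined (finite), non-decreasing and continuous on [0,M]. -/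
open MeasureTheory Set Filter

/-!
Write `h x u = g x u - min (g x u) m` (the positive part of `g x u - m`),
`G u = min (g M u) (g M u ^ 2)` and `D = |g x u - g y u|`. Since `h x u` vanishes unless
`g M u > m ≥ 1`, and there `G u = g M u`, one gets `0 ≤ h x u ≤ G u`, hence integrability;
monotonicity is inherited from `g`.

Continuity follows from the pointwise estimate `|h x u - h y u| ≤ η G u + η⁻¹ min D (D ^ 2)` for
`0 < η ≤ 1`, which integrates to `|β x - β y| ≤ η ∫ G + η⁻¹ ρ(|x - y|) ^ 2`. The divergence of
`∫ ρ⁻²` at `0` forces `ρ(0+) = 0` (`exists_modulus_lt`), so that `η` and then `|x - y|` may be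
chosen small.
-/

/-- If `ρ` were bounded below by `c > 0` on `(0, ∞)`, the integrals of `ρ⁻²` over `(ε, 1]` would
be bounded by `c⁻²`. -/
lemma exists_modulus_lt (ρ : ℝ → ℝ)
    (hdiv : Tendsto (fun ε : ℝ => ∫ z in Ioc ε 1, ((ρ z) ^ 2)⁻¹)
      (nhdsWithin 0 (Ioi 0)) atTop) {c : ℝ} (hc : 0 < c) : ∃ z, 0 < z ∧ ρ z < c := by
  by_contra! H
  obtain ⟨ε, h1, h2, h3⟩ := ((hdiv.eventually_gt_atTop ((c ^ 2)⁻¹)).and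
    ((eventually_mem_nhdsWithin (a := (0:ℝ)) (s := Ioi 0)).and
      (mem_nhdsWithin_of_mem_nhds (Iio_mem_nhds (zero_lt_one' ℝ))))).exists
  simp only [mem_Ioi] at h2
  replace h3 : ε < 1 := h3
  have hb := norm_setIntegral_le_of_norm_le_const (μ := volume) (s := Ioc ε 1)
    (f := fun z => ((ρ z) ^ 2)⁻¹) (C := (c ^ 2)⁻¹) (by simp) (by
      intro z hz
      have hz' := H z (h2.trans hz.1)
      rw [Real.norm_of_nonneg (by positivity)]
      gcongr)
  rw [Real.volume_real_Ioc_of_le h3.le] at hb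
  have h4 : (c ^ 2)⁻¹ * (1 - ε) ≤ (c ^ 2)⁻¹ :=
    mul_le_of_le_one_right (by positivity) (by linarith)
  linarith [Real.le_norm_self (∫ z in Ioc ε 1, ((ρ z) ^ 2)⁻¹)]

lemma min_sq_mono {a b : ℝ} (ha : 0 ≤ a) (hab : a ≤ b) : min a (a ^ 2) ≤ min b (b ^ 2) := by
  gcongr

lemma excess_nonneg (a m : ℝ) : 0 ≤ a - min a m := by
  linarith [min_le_left a m]

lemma excess_mono {a b : ℝ} (m : ℝ) (hab : a ≤ b) : a - min a m ≤ b - min b m := by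
  grind

lemma excess_le {a m : ℝ} (hm : 1 ≤ m) (ha : 0 ≤ a) : a - min a m ≤ min a (a ^ 2) := by
  rcases le_total a m with h | h
  · rw [min_eq_left h, sub_self]
    positivity
  · rw [min_eq_right h]
    refine le_min (by linarith) ?_
    nlinarith

/-- `b` bounds both `a₁` and `a₂`. When `b ≤ m` both truncation excesses vanish; otherwise
`min b (b ^ 2) ≥ 1`, and `d = |a₁ - a₂|` satisfies `d ≤ η + η⁻¹ * min d (d ^ 2)`. -/
lemma excess_sub_le {a₁ a₂ b m η : ℝ} (hm : 1 ≤ m) (hb : 0 ≤ b) (h₁ : a₁ ≤ b) (h₂ : a₂ ≤ b)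
    (hη : 0 < η) (hη1 : η ≤ 1) :
    |(a₁ - min a₁ m) - (a₂ - min a₂ m)| ≤
      η * min b (b ^ 2) + η⁻¹ * min |a₁ - a₂| ((a₁ - a₂) ^ 2) := by
  rcases le_total b m with h | h
  · rw [min_eq_left (h₁.trans h), min_eq_left (h₂.trans h)]
    simp only [sub_self, abs_zero]
    positivity
  · have hG : 1 ≤ min b (b ^ 2) := le_min (by linarith) (by nlinarith)
    have hlip : |(a₁ - min a₁ m) - (a₂ - min a₂ m)| ≤ |a₁ - a₂| := by grind
    have hηG : η ≤ η * min b (b ^ 2) := le_mul_of_one_le_right hη.le hG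
    have hinv : 1 ≤ η⁻¹ := (one_le_inv₀ hη).2 hη1
    rw [← sq_abs (a₁ - a₂)]
    set d := |a₁ - a₂|
    have hd : 0 ≤ d := abs_nonneg _
    have key : d ≤ η + η⁻¹ * min d (d ^ 2) := by
      rcases le_total d η with h | h
      · have : 0 ≤ η⁻¹ * min d (d ^ 2) := by positivity
        linarith
      · have : η * d ≤ min d (d ^ 2) := le_min (by nlinarith) (by nlinarith)
        have : d ≤ η⁻¹ * min d (d ^ 2) := by
          rwa [inv_mul_eq_div, le_div_iff₀' hη]
        linarith
    linarith

/-- The compensating drift `β(x) = ∫_U (g(x,u) - g(x,u) ∧ m) μ(du)` arising from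
truncating the jumps at level `m` is well defined (finite), non-decreasing and
continuous on `[0,M]`. -/
theorem stmt15 {U : Type*} [MeasurableSpace U] (μ : Measure U)
    (M m : ℝ) (hM : 0 < M) (hm : 1 ≤ m)
    (ρ : ℝ → ℝ) (hρ_nonneg : ∀ z, 0 ≤ z → 0 ≤ ρ z)
    (hρ_mono : MonotoneOn ρ (Ici 0))
    (hdiv : Tendsto (fun ε : ℝ => ∫ z in Ioc ε 1, ((ρ z) ^ 2)⁻¹)
      (nhdsWithin 0 (Ioi 0)) atTop)
    (g : ℝ → U → ℝ)
    (hg_meas : ∀ x ∈ Icc (0:ℝ) M, Measurable (g x))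
    (hg_nonneg : ∀ x ∈ Icc (0:ℝ) M, ∀ u, 0 ≤ g x u)
    (hg_mono : ∀ u : U, ∀ x ∈ Icc (0:ℝ) M, ∀ y ∈ Icc (0:ℝ) M, x ≤ y → g x u ≤ g y u)
    (hg_int : Integrable (fun u => min (g M u) ((g M u) ^ 2)) μ)
    (hg_bound : ∀ x ∈ Icc (0:ℝ) M, ∀ y ∈ Icc (0:ℝ) M,
      ∫ u, min |g x u - g y u| ((g x u - g y u) ^ 2) ∂μ ≤ (ρ |x - y|) ^ 2) :
    (∀ x ∈ Icc (0:ℝ) M, Integrable (fun u => g x u - min (g x u) m) μ) ∧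
    MonotoneOn (fun x => ∫ u, (g x u - min (g x u) m) ∂μ) (Icc (0:ℝ) M) ∧
    ContinuousOn (fun x => ∫ u, (g x u - min (g x u) m) ∂μ) (Icc (0:ℝ) M) := by
  have hMM : M ∈ Icc (0:ℝ) M := ⟨hM.le, le_rfl⟩
  have hint : ∀ x ∈ Icc (0:ℝ) M, Integrable (fun u => g x u - min (g x u) m) μ := by
    intro x hx
    have := hg_meas x hx
    refine hg_int.mono' (by fun_prop) (ae_of_all _ fun u => ?_)
    rw [Real.norm_of_nonneg (excess_nonneg _ _)]
    exact (excess_le hm (hg_nonneg x hx u)).trans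
      (min_sq_mono (hg_nonneg x hx u) (hg_mono u x hx M hMM hx.2))
  refine ⟨hint, ?_, ?_⟩
  · intro x hx y hy hxy
    exact integral_mono (hint x hx) (hint y hy) fun u =>
      excess_mono m (hg_mono u x hx y hy hxy)
  have hintD : ∀ x ∈ Icc (0:ℝ) M, ∀ y ∈ Icc (0:ℝ) M,
      Integrable (fun u => min |g x u - g y u| ((g x u - g y u) ^ 2)) μ := by
    intro x hx y hy
    have := hg_meas x hx
    have := hg_meas y hy
    refine hg_int.mono' (Measurable.aestronglyMeasurable (by fun_prop)) (ae_of_all _ fun u => ?_)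
    rw [Real.norm_of_nonneg (by positivity), ← sq_abs (g x u - g y u)]
    refine min_sq_mono (abs_nonneg _) (abs_le.2 ⟨?_, ?_⟩)
    · linarith [hg_nonneg x hx u, hg_mono u y hy M hMM hy.2]
    · linarith [hg_nonneg y hy u, hg_mono u x hx M hMM hx.2]
  set I := ∫ u, min (g M u) ((g M u) ^ 2) ∂μ with hI
  have hI0 : 0 ≤ I := integral_nonneg fun u => le_min (hg_nonneg M hMM u) (sq_nonneg _)
  have main : ∀ η : ℝ, 0 < η → η ≤ 1 → ∀ x ∈ Icc (0:ℝ) M, ∀ y ∈ Icc (0:ℝ) M,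
      |(∫ u, (g x u - min (g x u) m) ∂μ) - ∫ u, (g y u - min (g y u) m) ∂μ| ≤
        η * I + η⁻¹ * (ρ |x - y|) ^ 2 := by
    intro η hη hη1 x hx y hy
    rw [← integral_sub (hint x hx) (hint y hy)]
    rw [← Real.norm_eq_abs]
    calc ‖∫ u, ((g x u - min (g x u) m) - (g y u - min (g y u) m)) ∂μ‖
        ≤ ∫ u, (η * min (g M u) ((g M u) ^ 2)
            + η⁻¹ * min |g x u - g y u| ((g x u - g y u) ^ 2)) ∂μ :=
          norm_integral_le_of_norm_le
            ((hg_int.const_mul η).add ((hintD x hx y hy).const_mul η⁻¹))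
            (ae_of_all _ fun u => excess_sub_le hm (hg_nonneg M hMM u)
              (hg_mono u x hx M hMM hx.2) (hg_mono u y hy M hMM hy.2) hη hη1)
      _ = η * I + η⁻¹ * ∫ u, min |g x u - g y u| ((g x u - g y u) ^ 2) ∂μ := by
          rw [integral_add (hg_int.const_mul η) ((hintD x hx y hy).const_mul η⁻¹),
            integral_const_mul, integral_const_mul]
      _ ≤ η * I + η⁻¹ * (ρ |x - y|) ^ 2 := by
          gcongr
          exact hg_bound x hx y hy
  rw [Metric.continuousOn_iff]
  intro y hy ε hε
  obtain ⟨η, hη, hη1, hηI⟩ : ∃ η : ℝ, 0 < η ∧ η ≤ 1 ∧ η * I ≤ ε / 2 := by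
    refine ⟨min 1 (ε / (2 * (I + 1))), by positivity, min_le_left _ _, ?_⟩
    calc _ ≤ ε / (2 * (I + 1)) * (I + 1) := by
          gcongr
          · exact min_le_right _ _
          · linarith
      _ = ε / 2 := by field_simp
  obtain ⟨z, hz, hρz⟩ := exists_modulus_lt ρ hdiv (c := √(η * (ε / 2))) (by positivity)
  refine ⟨z, hz, fun x hx hxy => ?_⟩
  rw [Real.dist_eq] at hxy ⊢
  have h0 := hρ_nonneg _ (abs_nonneg (x - y))
  have hlt : (ρ |x - y|) ^ 2 < η * (ε / 2) :=
    (Real.lt_sqrt h0).1 ((hρ_mono (mem_Ici.2 (abs_nonneg _)) (mem_Ici.2 hz.le) hxy.le).trans_lt hρz)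
  have : η⁻¹ * (ρ |x - y|) ^ 2 < ε / 2 := by
    rwa [inv_mul_eq_div, div_lt_iff₀' hη]
  linarith [main η hη hη1 x hx y hy]
end
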